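/- arXiv:1207.5839 — 2 statements merged into one kernel-verified Lean document; each statement's English description precedes it below -/
import Mathlib

section
/- For every t ≥ 1, the matrix M₂(t) and the vector φ(t) have their nonzero rows in exactly the same positions: for every delay-node index k, row k of M₂(t) is nonzero if and only if φ_k(t) = 1. -/
open Matrix Filter BigOperators
open scoped Classical

noncomputable section

/-- A directed graph on `Fin n` with `m` directed edges, edge `e` going from
`src e` to `tgt e`. -/
structure DGraph (n m : ℕ) where
  src : Fin m → Fin n
  tgt : Fin m → Fin n

/-- Hypotheses of the random-delay consensus model: no self-loops, distinct edges,
`P` row stochastic respecting `G` (hence with positive diagonal), and `G` strongly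
connected. -/
structure DGraph.Valid {n m : ℕ} (G : DGraph n m) (P : Matrix (Fin n) (Fin n) ℝ) : Prop where
  noSelf : ∀ e, G.src e ≠ G.tgt e
  edgeInj : ∀ e e', G.src e = G.src e' → G.tgt e = G.tgt e' → e = e'
  nonneg : ∀ i j, 0 ≤ P i j
  rowSum : ∀ i, ∑ j, P i j = 1
  support : ∀ i j, 0 < P i j ↔ i = j ∨ ∃ e, G.src e = j ∧ G.tgt e = i
  connected : ∀ i j : Fin n,
    Relation.ReflTransGen (fun a b => ∃ e, G.src e = a ∧ G.tgt e = b) i j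

/-- Delay nodes: for every directed edge `e : Fin m`, every chain-length index
`ℓ : Fin B` (the parallel chain modelling a delay of `ℓ.1 + 1`), and every
position `k : Fin B` with `k ≤ ℓ` along that chain.  There are `m·B(B+1)/2`
of them in total. -/
def DelayNode (m B : ℕ) : Type :=
  {q : Fin m × Fin B × Fin B // q.2.2.1 ≤ q.2.1.1}

instance (m B : ℕ) : Fintype (DelayNode m B) := by
  unfold DelayNode; infer_instance

instance (m B : ℕ) : DecidableEq (DelayNode m B) := by
  unfold DelayNode; infer_instance

namespace RandomDelay

variable {n m B : ℕ}

/-- The edge a delay node belongs to. -/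
def edgeOf (d : DelayNode m B) : Fin m := d.val.1
/-- The chain (of length `lenIdx d + 1`) a delay node belongs to. -/
def lenIdx (d : DelayNode m B) : ℕ := d.val.2.1.1
/-- The (0-indexed) position of a delay node along its chain. -/
def posIdx (d : DelayNode m B) : ℕ := d.val.2.2.1
/-- `d` is the terminal node of its chain. -/
def isTerminal (d : DelayNode m B) : Prop := d.val.2.2 = d.val.2.1

/-- The fixed block-diagonal forward-shift matrix `C`: a message at position `k`
of a chain moves to position `k+1` of the same chain. -/
def Cmat (m B : ℕ) : Matrix (DelayNode m B) (DelayNode m B) ℝ := fun d d' =>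
  if d.val.1 = d'.val.1 ∧ d.val.2.1 = d'.val.2.1 ∧ posIdx d = posIdx d' + 1 then 1 else 0

/-- The fixed delivery matrix `J`: `J i d = 1` iff `d` is the terminal node of a
chain on an edge pointing into compute node `i`. -/
def Jmat (G : DGraph n m) (B : ℕ) : Matrix (Fin n) (DelayNode m B) ℝ := fun i d =>
  if G.tgt (edgeOf d) = i ∧ isTerminal d then 1 else 0

/-- `L(t)`: zero-delay deliveries.  `L t i j = 1` iff at iteration `t` node `j`
sends its message on the edge `j → i` with zero delay. -/
def Lmat (G : DGraph n m) (del : ℕ → Fin m → Fin (B + 1)) (t : ℕ) :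
    Matrix (Fin n) (Fin n) ℝ := fun i j =>
  if ∃ e, G.src e = j ∧ G.tgt e = i ∧ (del t e).1 = 0 then 1 else 0

/-- `R(t)`: routing of messages into delay chains.  `R t d j = 1` iff `d` is the
first node of the chain of length `ℓ+1` on an edge out of `j`, and at iteration
`t` node `j`'s message on that edge is assigned delay `ℓ+1`. -/
def Rmat (G : DGraph n m) (del : ℕ → Fin m → Fin (B + 1)) (t : ℕ) :
    Matrix (DelayNode m B) (Fin n) ℝ := fun d j =>
  if G.src (edgeOf d) = j ∧ posIdx d = 0 ∧ (del t (edgeOf d)).1 = lenIdx d + 1 then 1 else 0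

/-- Occupancy vector: `φ 0 = 0` and `φ t = R(t)·1 + C·φ(t-1)`. -/
def phi (G : DGraph n m) (del : ℕ → Fin m → Fin (B + 1)) : ℕ → DelayNode m B → ℝ
  | 0 => fun _ => 0
  | t + 1 => Rmat G del (t + 1) *ᵥ (fun _ => 1) + Cmat m B *ᵥ phi G del t

/-- `ŵ_{ij}(t)`: the number of delay chains from `j` to `i` whose terminal node is
occupied at time `t - 1`, i.e. the number of delayed messages `i` receives from `j`
at iteration `t`. -/
def wgt (G : DGraph n m) (del : ℕ → Fin m → Fin (B + 1)) (t : ℕ) (i j : Fin n) : ℕ :=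
  (Finset.univ.filter (fun d : DelayNode m B =>
    G.tgt (edgeOf d) = i ∧ G.src (edgeOf d) = j ∧ isTerminal d ∧
      phi G del (t - 1) d = 1)).card

/-- Total number of messages (delayed plus undelayed) that `i` receives from `j`
at iteration `t`, as a real number. -/
def denom (G : DGraph n m) (del : ℕ → Fin m → Fin (B + 1)) (t : ℕ) (i j : Fin n) : ℝ :=
  (wgt G del t i j : ℝ) + Lmat G del t i j

/-- `P̄[L(t)]`: each entry `1` of `L(t)` (a zero-delay message from `j` to `i`) is
replaced with the weight `P i j / (ŵ_{ij} + L_{ij}(t))`. -/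
def PLmat (G : DGraph n m) (P : Matrix (Fin n) (Fin n) ℝ)
    (del : ℕ → Fin m → Fin (B + 1)) (t : ℕ) : Matrix (Fin n) (Fin n) ℝ := fun i j =>
  Lmat G del t i j * (P i j / denom G del t i j)

/-- `P̄[φ(t-1)]`: each entry `1` of `J·diag(φ(t-1))` (a delayed message from `j`
delivered to `i`) is replaced with the weight `P i j / (ŵ_{ij} + L_{ij}(t))`. -/
def PFmat (G : DGraph n m) (P : Matrix (Fin n) (Fin n) ℝ)
    (del : ℕ → Fin m → Fin (B + 1)) (t : ℕ) : Matrix (Fin n) (DelayNode m B) ℝ := fun i d =>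
  Jmat G B i d * phi G del (t - 1) d *
    (P i (G.src (edgeOf d)) / denom G del t i (G.src (edgeOf d)))

/-- Top-left block `P̂₁₁(t) = I − diag(P̄[φ(t−1)]·1_b + P̄[L(t)]·1_n) + P̄[L(t)]`. -/
def P11 (G : DGraph n m) (P : Matrix (Fin n) (Fin n) ℝ)
    (del : ℕ → Fin m → Fin (B + 1)) (t : ℕ) : Matrix (Fin n) (Fin n) ℝ :=
  1 - Matrix.diagonal (fun i => (∑ d, PFmat G P del t i d) + (∑ j, PLmat G P del t i j))
    + PLmat G P del t

/-- The delayed transition matrix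
`P̂(t) = [[P̂₁₁(t), P̄[φ(t−1)]], [R(t), C]]`. -/
def Phat (G : DGraph n m) (P : Matrix (Fin n) (Fin n) ℝ)
    (del : ℕ → Fin m → Fin (B + 1)) (t : ℕ) :
    Matrix (Fin n ⊕ DelayNode m B) (Fin n ⊕ DelayNode m B) ℝ :=
  Matrix.fromBlocks (P11 G P del t) (PFmat G P del t) (Rmat G del t) (Cmat m B)

/-- The state: `x̂(0) = (x(0), 0_b)` and `x̂(t) = P̂(t)·x̂(t−1)`. -/
def xhat (G : DGraph n m) (P : Matrix (Fin n) (Fin n) ℝ)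
    (del : ℕ → Fin m → Fin (B + 1)) (x0 : Fin n → ℝ) :
    ℕ → (Fin n ⊕ DelayNode m B) → ℝ
  | 0 => Sum.elim x0 (fun _ => 0)
  | t + 1 => Phat G P del (t + 1) *ᵥ xhat G P del x0 t

/-- The product `M(t) = P̂(t)·P̂(t−1)⋯P̂(1)` (with `M(0) = I`). -/
def Mprod (G : DGraph n m) (P : Matrix (Fin n) (Fin n) ℝ)
    (del : ℕ → Fin m → Fin (B + 1)) :
    ℕ → Matrix (Fin n ⊕ DelayNode m B) (Fin n ⊕ DelayNode m B) ℝ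
  | 0 => 1
  | t + 1 => Phat G P del (t + 1) * Mprod G P del t

/-- Top-left `n × n` block of `M(t)`. -/
def M1 (G : DGraph n m) (P : Matrix (Fin n) (Fin n) ℝ)
    (del : ℕ → Fin m → Fin (B + 1)) (t : ℕ) : Matrix (Fin n) (Fin n) ℝ :=
  fun i j => Mprod G P del t (Sum.inl i) (Sum.inl j)

/-- Bottom-left `b × n` block of `M(t)`. -/
def M2 (G : DGraph n m) (P : Matrix (Fin n) (Fin n) ℝ)
    (del : ℕ → Fin m → Fin (B + 1)) (t : ℕ) : Matrix (DelayNode m B) (Fin n) ℝ :=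
  fun d j => Mprod G P del t (Sum.inr d) (Sum.inl j)

/-- A node is occupied at time `t` if it is a compute node, or a delay node `d`
with `φ_d(t) = 1`. -/
def occupied (G : DGraph n m) (del : ℕ → Fin m → Fin (B + 1)) (t : ℕ) :
    (Fin n ⊕ DelayNode m B) → Prop
  | Sum.inl _ => True
  | Sum.inr d => phi G del t d = 1

/-- Maximum of the state over the occupied nodes at time `t`. -/
def occMax (G : DGraph n m) (P : Matrix (Fin n) (Fin n) ℝ)
    (del : ℕ → Fin m → Fin (B + 1)) (x0 : Fin n → ℝ) (t : ℕ) : ℝ :=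
  sSup {y : ℝ | ∃ v, occupied G del t v ∧ xhat G P del x0 t v = y}

/-- Minimum of the state over the occupied nodes at time `t`. -/
def occMin (G : DGraph n m) (P : Matrix (Fin n) (Fin n) ℝ)
    (del : ℕ → Fin m → Fin (B + 1)) (x0 : Fin n → ℝ) (t : ℕ) : ℝ :=
  sInf {y : ℝ | ∃ v, occupied G del t v ∧ xhat G P del x0 t v = y}

end RandomDelay

end

/-!
Two facts about a single row `d` of `M₂(t)` suffice. Its entries sum to `φ_d(t)`, because `P̂(t)`
sends the vector `(1, φ(t-1))` to `(1, φ(t))`; so an occupied row is nonzero. Conversely, every row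
of `[R(t), C]` is zero or a coordinate vector, so a delay node copies one entry of the previous
state or becomes empty; hence `φ` has entries in `{0, 1}`, and an unoccupied row, having copied only
from unoccupied rows, is zero.
-/

/-- Matrices each of whose rows is zero or a coordinate vector, so that every entry of `A *ᵥ v` is
zero or a copy of an entry of `v`. The delay rows `[R(t), C]` of `P̂(t)` have this form. -/
def IsPartialSelection {α β R : Type*} [DecidableEq β] [Zero R] [One R] (A : Matrix α β R) : Prop :=
  ∀ a, A a = 0 ∨ ∃ b, A a = Pi.single b 1

namespace IsPartialSelection

variable {α β γ R : Type*} [DecidableEq β]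

theorem of_ite [Zero R] [One R] {p : α → β → Prop} [∀ a b, Decidable (p a b)]
    (hp : ∀ a b b', p a b → p a b' → b = b') :
    IsPartialSelection (fun a b => if p a b then (1 : R) else 0) := by
  intro a
  by_cases h : ∃ b, p a b
  · obtain ⟨b, hb⟩ := h
    refine Or.inr ⟨b, funext fun b' => ?_⟩
    have hp_iff : p a b' ↔ b' = b := ⟨fun hb' => hp a b' b hb' hb, fun h => h ▸ hb⟩
    simp only [hp_iff, Pi.single_apply]
  · push Not at h
    exact Or.inl (funext fun b => if_neg (h b))

theorem fromCols [DecidableEq γ] [Zero R] [One R] {A : Matrix α β R} {B : Matrix α γ R}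
    (hA : IsPartialSelection A) (hB : IsPartialSelection B) (hAB : ∀ a, A a = 0 ∨ B a = 0) :
    IsPartialSelection (Matrix.fromCols A B) := by
  intro a
  have row : Matrix.fromCols A B a = Sum.elim (A a) (B a) := by ext (b | c) <;> rfl
  rw [row]
  rcases hAB a with hA0 | hB0
  · rw [hA0]
    rcases hB a with hB0 | ⟨c, hc⟩
    · exact Or.inl (by rw [hB0, Sum.elim_zero_zero])
    · exact Or.inr ⟨Sum.inr c, by rw [hc, Sum.elim_zero_single]⟩
  · rw [hB0]
    rcases hA a with hA0 | ⟨b, hb⟩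
    · exact Or.inl (by rw [hA0, Sum.elim_zero_zero])
    · exact Or.inr ⟨Sum.inl b, by rw [hb, Sum.elim_single_zero]⟩

variable [Fintype β] [NonAssocSemiring R] {A : Matrix α β R}

theorem mulVec_mem (hA : IsPartialSelection A) {S : Set R} (hS : 0 ∈ S) {v : β → R}
    (hv : ∀ b, v b ∈ S) (a : α) : (A *ᵥ v) a ∈ S := by
  rcases hA a with h | ⟨b, h⟩
  · simpa [mulVec, h] using hS
  · simpa [mulVec, h] using hv b

theorem mul_row_eq_zero_of_mulVec_eq_zero (hA : IsPartialSelection A) {v : β → R} {N : Matrix β γ R}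
    (hN : ∀ b, v b = 0 → N b = 0) {a : α} (ha : (A *ᵥ v) a = 0) : (A * N) a = 0 := by
  rw [mul_apply_eq_vecMul]
  rcases hA a with h | ⟨b, h⟩
  · rw [h, zero_vecMul]
  · have hvb : v b = 0 := by simpa [mulVec, h] using ha
    rw [h, single_one_vecMul]
    exact hN b hvb

end IsPartialSelection

namespace RandomDelay

variable {n m B : ℕ} (G : DGraph n m) (P : Matrix (Fin n) (Fin n) ℝ)
  (del : ℕ → Fin m → Fin (B + 1)) (t : ℕ)

theorem isPartialSelection_Rmat : IsPartialSelection (Rmat G del t) :=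
  .of_ite fun _ _ _ h h' => h.1.symm.trans h'.1

theorem isPartialSelection_Cmat (m B : ℕ) : IsPartialSelection (Cmat m B) := by
  refine .of_ite ?_
  rintro d d₁ d₂ ⟨edge₁, chain₁, pos₁⟩ ⟨edge₂, chain₂, pos₂⟩
  have pos_eq : posIdx d₁ = posIdx d₂ := Nat.succ.inj (pos₁.symm.trans pos₂)
  exact Subtype.ext <| Prod.ext (edge₁.symm.trans edge₂) <|
    Prod.ext (chain₁.symm.trans chain₂) (Fin.ext pos_eq)

theorem Rmat_row_eq_zero_or_Cmat_row_eq_zero (d : DelayNode m B) :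
    Rmat G del t d = 0 ∨ Cmat m B d = 0 := by
  by_cases hpos : posIdx d = 0
  · exact Or.inr (funext fun d' => by simp [Cmat, hpos])
  · exact Or.inl (funext fun j => by simp [Rmat, hpos])

theorem isPartialSelection_fromCols_Rmat_Cmat :
    IsPartialSelection (fromCols (Rmat G del t) (Cmat m B)) :=
  (isPartialSelection_Rmat G del t).fromCols (isPartialSelection_Cmat m B)
    (Rmat_row_eq_zero_or_Cmat_row_eq_zero G del t)

theorem phi_succ_eq_fromCols_mulVec :
    phi G del (t + 1) =
      fromCols (Rmat G del (t + 1)) (Cmat m B) *ᵥ Sum.elim 1 (phi G del t) :=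
  (fromCols_mulVec_sumElim _ _ _ _).symm

theorem phi_eq_zero_or_one (d : DelayNode m B) : phi G del t d = 0 ∨ phi G del t d = 1 := by
  induction t generalizing d with
  | zero => exact Or.inl rfl
  | succ t ih =>
    have state_mem (v : Fin n ⊕ DelayNode m B) :
        Sum.elim 1 (phi G del t) v ∈ ({0, 1} : Set ℝ) := by
      rcases v with i | d'
      · exact Or.inr rfl
      · exact ih d'
    rw [phi_succ_eq_fromCols_mulVec]
    exact (isPartialSelection_fromCols_Rmat_Cmat G del (t + 1)).mulVec_mem
      (Set.mem_insert 0 {1}) state_mem d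

theorem M1_zero : M1 G P del 0 = 1 := by
  ext i j
  simp [M1, Mprod, Matrix.one_apply]

theorem M2_zero : M2 G P del 0 = 0 := by
  ext d j
  simp [M2, Mprod]

theorem M1_succ :
    M1 G P del (t + 1) =
      P11 G P del (t + 1) * M1 G P del t + PFmat G P del (t + 1) * M2 G P del t := by
  ext i j
  simp [M1, M2, Mprod, Phat, Matrix.mul_apply, Fintype.sum_sum_type]

theorem M2_succ :
    M2 G P del (t + 1) = Rmat G del (t + 1) * M1 G P del t + Cmat m B * M2 G P del t := by
  ext d j
  simp [M1, M2, Mprod, Phat, Matrix.mul_apply, Fintype.sum_sum_type]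

theorem P11_mulVec_one : P11 G P del t *ᵥ 1 = 1 - PFmat G P del t *ᵥ 1 := by
  ext i
  rw [P11, add_mulVec, sub_mulVec, one_mulVec]
  simp only [Pi.add_apply, Pi.sub_apply, mulVec_diagonal]
  simp only [mulVec, dotProduct, Pi.one_apply, mul_one]
  ring

theorem PFmat_succ_mulVec_phi :
    PFmat G P del (t + 1) *ᵥ phi G del t = PFmat G P del (t + 1) *ᵥ 1 := by
  ext i
  refine Finset.sum_congr rfl fun d _ => ?_
  rcases phi_eq_zero_or_one G del t d with h | h <;> simp [PFmat, h]

theorem M1_mulVec_one_and_M2_mulVec_one :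
    M1 G P del t *ᵥ 1 = 1 ∧ M2 G P del t *ᵥ 1 = phi G del t := by
  induction t with
  | zero => exact ⟨by rw [M1_zero, one_mulVec], by rw [M2_zero, zero_mulVec]; rfl⟩
  | succ t ih =>
    obtain ⟨ih₁, ih₂⟩ := ih
    constructor
    · rw [M1_succ, add_mulVec, ← mulVec_mulVec, ← mulVec_mulVec, ih₁, ih₂, P11_mulVec_one,
        PFmat_succ_mulVec_phi, sub_add_cancel]
    · rw [M2_succ, add_mulVec, ← mulVec_mulVec, ← mulVec_mulVec, ih₁, ih₂]
      rfl

theorem M2_row_eq_zero_of_phi_eq_zero {d : DelayNode m B} (hd : phi G del t d = 0) :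
    M2 G P del t d = 0 := by
  induction t generalizing d with
  | zero => rw [M2_zero]; rfl
  | succ t ih =>
    have row_eq_zero (v : Fin n ⊕ DelayNode m B)
        (hv : Sum.elim (1 : Fin n → ℝ) (phi G del t) v = 0) :
        fromRows (M1 G P del t) (M2 G P del t) v = 0 := by
      rcases v with i | d'
      · exact absurd hv one_ne_zero
      · exact ih hv
    rw [phi_succ_eq_fromCols_mulVec] at hd
    rw [M2_succ, ← fromCols_mul_fromRows]
    exact (isPartialSelection_fromCols_Rmat_Cmat G del (t + 1)).mul_row_eq_zero_of_mulVec_eq_zero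
      row_eq_zero hd

end RandomDelay

open RandomDelay in
theorem random_delay_M2_rows_match_phi_general {n m B : ℕ} (G : DGraph n m)
    (P : Matrix (Fin n) (Fin n) ℝ) (del : ℕ → Fin m → Fin (B + 1)) (t : ℕ) (d : DelayNode m B) :
    (∃ j, M2 G P del t d j ≠ 0) ↔ phi G del t d = 1 := by
  constructor
  · rintro ⟨j, hj⟩
    exact (phi_eq_zero_or_one G del t d).resolve_left
      fun hd => hj (congrFun (M2_row_eq_zero_of_phi_eq_zero G P del t hd) j)
  · intro hd
    have row_sum : ∑ j, M2 G P del t d j = 1 := by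
      rw [← hd, ← (M1_mulVec_one_and_M2_mulVec_one G P del t).2]
      simp [mulVec, dotProduct]
    by_contra! row_zero
    simp [row_zero] at row_sum

open RandomDelay in
/-- **Nonzero rows of `M₂(t)` match the occupancy vector `φ(t)`.**  For every
`t ≥ 1` and every delay node `d`, row `d` of `M₂(t)` is nonzero iff `φ_d(t) = 1`. -/
theorem random_delay_M2_rows_match_phi
    {n m B : ℕ} (hn : 0 < n) (hB : 1 ≤ B)
    (G : DGraph n m) (P : Matrix (Fin n) (Fin n) ℝ) (hV : G.Valid P)
    (del : ℕ → Fin m → Fin (B + 1)) (t : ℕ) (ht : 1 ≤ t) (d : DelayNode m B) :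
    (∃ j, M2 G P del t d j ≠ 0) ↔ phi G del t d = 1 :=
  random_delay_M2_rows_match_phi_general G P del t d
end

section
/- The compute nodes asymptotically reach consensus on a convex combination of their initial values: there exist v ∈ ℝ and weights θ_1,…,θ_n ≥ 0 with Σ_{j=1}^n θ_j = 1 such that x̂_i(t) → v as t → ∞ for every compute node i, and v = Σ_{j=1}^n θ_j x_j(0). -/
open Matrix Filter BigOperators
open scoped Classical

/-!
A compute node only ever replaces its value by a convex combination of values that compute nodes
held during the last `B + 1` instants: an occupied delay node stores such a value, and an empty one
gets weight zero. In this combination the node's own last value and every received message carry at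
least a fixed weight `ε > 0`, and every message is received within `B` steps. Hence the maximum of
the recent values never increases, and any gap between it and the current value of some node reaches
all nodes, diminished at most by a factor `ε ^ r`, once `r` is large. Applied to the values and to
their negatives, this contracts the range of the recent values, so that all nodes share one limit.
The state depends linearly on `x0`; the limits of the basis vectors are the weights `θ`.
-/

theorem exists_mem_sum_smul_eq_of_convex {𝕜 E ι : Type*} [Field 𝕜] [LinearOrder 𝕜]
    [IsStrictOrderedRing 𝕜] [AddCommGroup E] [Module 𝕜 E] [Fintype ι] {s : Set E}
    (hs : Convex 𝕜 s) {w : ι → 𝕜} {z : ι → E} {ε : 𝕜} {k : ι} (hw : ∀ i, 0 ≤ w i)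
    (hsum : ∑ i, w i = 1) (hz : ∀ i, w i ≠ 0 → z i ∈ s) (hε₀ : 0 < ε) (hε₁ : ε < 1)
    (hk : ε ≤ w k) : ∃ a ∈ s, ∑ i, w i • z i = ε • z k + (1 - ε) • a := by
  have hε : 0 < 1 - ε := sub_pos.2 hε₁
  let w' : ι → 𝕜 := fun i => (1 - ε)⁻¹ * (w i - (Pi.single k ε : ι → 𝕜) i)
  have hw' : ∀ i, 0 ≤ w' i := fun i => mul_nonneg (inv_nonneg.2 hε.le) <| sub_nonneg.2 <| by
    rcases eq_or_ne i k with rfl | hik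
    · simpa using hk
    · simpa [hik] using hw i
  have hsum' : ∑ i, w' i = 1 := by
    simp [w', ← Finset.mul_sum, hsum, hε.ne']
  have hz' : ∀ i, w' i ≠ 0 → z i ∈ s := by
    intro i hi
    rcases eq_or_ne i k with rfl | hik
    · exact hz i (hε₀.trans_le hk).ne'
    · exact hz i fun h => hi (by simp [w', h, hik])
  refine ⟨∑ i, w' i • z i, ?_, ?_⟩
  · simpa only [finsum_eq_sum_of_fintype] using
      hs.finsum_mem hw' (by rwa [finsum_eq_sum_of_fintype]) hz'
  · simp [w', mul_smul, ← Finset.smul_sum, hε.ne', sub_smul, Finset.sum_sub_distrib,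
      Pi.single_apply, ite_smul]

theorem exists_mem_Ioo_forall_le {ι : Type*} [Finite ι] (f : ι → ℝ) :
    ∃ ε ∈ Set.Ioo (0 : ℝ) 1, ∀ i, 0 < f i → ε ≤ f i := by
  have hf : ∀ᶠ ε : ℝ in nhdsWithin 0 (Set.Ioi 0), ∀ i, 0 < f i → ε ≤ f i :=
    eventually_all.2 fun i => eventually_imp_distrib_left.2 fun hi =>
      mem_of_superset (Ioc_mem_nhdsGT hi) fun _ hε => hε.2
  obtain ⟨ε, hε, hεf⟩ := (Eventually.and (Ioo_mem_nhdsGT one_pos) hf).exists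
  exact ⟨ε, hε, hεf⟩

section RecentValues

variable {V : Type*} {B : ℕ} {y : ℕ → V → ℝ} {t : ℕ} {M : ℝ}

/-- The values taken by the nodes at the instants `t - B, …, t`. Since the subtraction is truncated,
the window is shorter while `t < B`. -/
def recentValues (B : ℕ) (y : ℕ → V → ℝ) (t : ℕ) : Set ℝ :=
  Set.image2 y (Set.Icc (t - B) t) Set.univ

theorem mem_recentValues {s : ℕ} (hst : s ≤ t) (hts : t ≤ s + B) (j : V) :
    y s j ∈ recentValues B y t :=
  Set.mem_image2_of_mem ⟨Nat.sub_le_of_le_add hts, hst⟩ (Set.mem_univ j)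

theorem mem_recentValues_self (t : ℕ) (j : V) : y t j ∈ recentValues B y t :=
  mem_recentValues le_rfl (Nat.le_add_right t B) j

theorem mem_upperBounds_recentValues :
    M ∈ upperBounds (recentValues B y t) ↔ ∀ s ≤ t, t ≤ s + B → ∀ j, y s j ≤ M := by
  refine ⟨fun hM s hst hts j => hM (mem_recentValues hst hts j), ?_⟩
  rintro hM _ ⟨s, hs, j, -, rfl⟩
  exact hM s hs.2 (by have := hs.1; omega) j

theorem mem_upperBounds_recentValues_zero :
    M ∈ upperBounds (recentValues B y 0) ↔ ∀ j, y 0 j ≤ M := by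
  simp [mem_upperBounds_recentValues]

open scoped Pointwise in
theorem recentValues_neg (t : ℕ) : recentValues B (-y) t = -recentValues B y t := by
  rw [← Set.image_neg_eq_neg, recentValues, recentValues, Set.image_image2]
  rfl

/-- The maximum of the recent values (`recentMax B (-y)` is minus their minimum). -/
noncomputable def recentMax (B : ℕ) (y : ℕ → V → ℝ) (t : ℕ) : ℝ :=
  sSup (recentValues B y t)

theorem recentMax_mem_upperBounds [Finite V] :
    recentMax B y t ∈ upperBounds (recentValues B y t) := fun _ ha =>
  le_csSup ((Set.finite_Icc _ _).image2 y Set.finite_univ).bddAbove ha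

theorem recentMax_le [Nonempty V] (hM : M ∈ upperBounds (recentValues B y t)) :
    recentMax B y t ≤ M :=
  csSup_le ⟨_, mem_recentValues_self t (Classical.arbitrary V)⟩ hM

end RecentValues

/-- Averaging with delays bounded by `B`: every new value is a convex combination of recent values
in which the node's own last value has a share of at least `ε`, and the value of `j` at any time `t`
gets such a share in the update of every successor of `j` at some time `t + k + 1`, `k ≤ B`. -/
structure IsDelayedAveraging {V : Type*} (B : ℕ) (ε : ℝ) (E : V → V → Prop) (y : ℕ → V → ℝ) :
    Prop where
  pos : 0 < ε
  le_one : ε ≤ 1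
  self : ∀ t i, ∃ a ∈ convexHull ℝ (recentValues B y t), y (t + 1) i = ε * y t i + (1 - ε) * a
  edge : ∀ t i j, E j i → ∃ k ≤ B, ∃ a ∈ convexHull ℝ (recentValues B y (t + k)),
    y (t + k + 1) i = ε * y t j + (1 - ε) * a

namespace IsDelayedAveraging

variable {V : Type*} {B : ℕ} {ε : ℝ} {E : V → V → Prop} {y : ℕ → V → ℝ} {t : ℕ} {M : ℝ}

theorem neg (h : IsDelayedAveraging B ε E y) : IsDelayedAveraging B ε E (-y) where
  pos := h.pos
  le_one := h.le_one
  self t i := by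
    obtain ⟨a, ha, hy⟩ := h.self t i
    refine ⟨-a, ?_, by simp only [Pi.neg_apply, hy]; ring⟩
    rwa [recentValues_neg, convexHull_neg, Set.neg_mem_neg]
  edge t i j hji := by
    obtain ⟨k, hk, a, ha, hy⟩ := h.edge t i j hji
    refine ⟨k, hk, -a, ?_, by simp only [Pi.neg_apply, hy]; ring⟩
    rwa [recentValues_neg, convexHull_neg, Set.neg_mem_neg]

theorem mul_sub_le_sub_of_eq (h : IsDelayedAveraging B ε E y)
    (hM : M ∈ upperBounds (recentValues B y t)) {a b c : ℝ}
    (ha : a ∈ convexHull ℝ (recentValues B y t)) (hc : c = ε * b + (1 - ε) * a) :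
    ε * (M - b) ≤ M - c := by
  have haM : a ≤ M := convexHull_min hM (convex_Iic M) ha
  have := mul_le_mul_of_nonneg_left haM (sub_nonneg.2 h.le_one)
  linarith

theorem mul_sub_le_sub_succ (h : IsDelayedAveraging B ε E y)
    (hM : M ∈ upperBounds (recentValues B y t)) (i : V) :
    ε * (M - y t i) ≤ M - y (t + 1) i := by
  obtain ⟨a, ha, hy⟩ := h.self t i
  exact h.mul_sub_le_sub_of_eq hM ha hy

theorem mem_upperBounds_recentValues_add (h : IsDelayedAveraging B ε E y)
    (hM : M ∈ upperBounds (recentValues B y t)) (r : ℕ) :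
    M ∈ upperBounds (recentValues B y (t + r)) := by
  induction r with
  | zero => exact hM
  | succ r ih =>
    refine mem_upperBounds_recentValues.2 fun s hst hts i => ?_
    rcases hst.lt_or_eq with hlt | rfl
    · exact mem_upperBounds_recentValues.1 ih s (by omega) (by omega) i
    · have hgap := sub_nonneg.2 (ih (mem_recentValues_self _ i))
      exact sub_nonneg.1 ((mul_nonneg h.pos.le hgap).trans (h.mul_sub_le_sub_succ ih i))

theorem apply_le_of_initial_le (h : IsDelayedAveraging B ε E y) (hM : ∀ j, y 0 j ≤ M) (t : ℕ)
    (i : V) : y t i ≤ M := by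
  have := h.mem_upperBounds_recentValues_add (mem_upperBounds_recentValues_zero.2 hM) t
  rw [Nat.zero_add] at this
  exact this (mem_recentValues_self t i)

theorem le_apply_of_le_initial (h : IsDelayedAveraging B ε E y) (hM : ∀ j, M ≤ y 0 j) (t : ℕ)
    (i : V) : M ≤ y t i :=
  neg_le_neg_iff.1 (h.neg.apply_le_of_initial_le (fun j => neg_le_neg (hM j)) t i)

theorem pow_mul_sub_le_sub_add (h : IsDelayedAveraging B ε E y)
    (hM : M ∈ upperBounds (recentValues B y t)) (i : V) (r : ℕ) :
    ε ^ r * (M - y t i) ≤ M - y (t + r) i := by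
  induction r with
  | zero => simp
  | succ r ih =>
    calc ε ^ (r + 1) * (M - y t i) = ε * (ε ^ r * (M - y t i)) := by ring
      _ ≤ ε * (M - y (t + r) i) := mul_le_mul_of_nonneg_left ih h.pos.le
      _ ≤ M - y (t + (r + 1)) i :=
        h.mul_sub_le_sub_succ (h.mem_upperBounds_recentValues_add hM r) i

theorem pow_mul_sub_le_sub_of_edge (h : IsDelayedAveraging B ε E y)
    (hM : M ∈ upperBounds (recentValues B y t)) {i j : V} (hji : E j i) :
    ε ^ (B + 1) * (M - y t j) ≤ M - y (t + (B + 1)) i := by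
  obtain ⟨k, hk, a, ha, hy⟩ := h.edge t i j hji
  have hε := h.pos.le
  have hgap : 0 ≤ M - y t j := sub_nonneg.2 (hM (mem_recentValues_self t j))
  have harrival := h.mul_sub_le_sub_of_eq (h.mem_upperBounds_recentValues_add hM k) ha hy
  calc ε ^ (B + 1) * (M - y t j) ≤ ε ^ (B - k + 1) * (M - y t j) :=
        mul_le_mul_of_nonneg_right (pow_le_pow_of_le_one hε h.le_one (by omega)) hgap
    _ = ε ^ (B - k) * (ε * (M - y t j)) := by ring
    _ ≤ ε ^ (B - k) * (M - y (t + k + 1) i) := by gcongr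
    _ ≤ M - y (t + (k + 1) + (B - k)) i :=
        h.pow_mul_sub_le_sub_add (h.mem_upperBounds_recentValues_add hM (k + 1)) i (B - k)
    _ = M - y (t + (B + 1)) i := by rw [show t + (k + 1) + (B - k) = t + (B + 1) by omega]

theorem eventually_pow_mul_sub_le_sub (h : IsDelayedAveraging B ε E y) {i j : V}
    (hji : Relation.ReflTransGen E j i) :
    ∀ᶠ r in atTop, ∀ t, ∀ M ∈ upperBounds (recentValues B y t),
      ε ^ r * (M - y t j) ≤ M - y (t + r) i := by
  induction hji with
  | refl => exact .of_forall fun r t M hM => h.pow_mul_sub_le_sub_add hM j r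
  | @tail k i _ hki ih =>
    rw [← map_add_atTop_eq_nat (B + 1), eventually_map]
    filter_upwards [ih] with r hr t M hM
    calc ε ^ (r + (B + 1)) * (M - y t j) = ε ^ (B + 1) * (ε ^ r * (M - y t j)) := by ring
      _ ≤ ε ^ (B + 1) * (M - y (t + r) k) :=
        mul_le_mul_of_nonneg_left (hr t M hM) (pow_nonneg h.pos.le _)
      _ ≤ M - y (t + r + (B + 1)) i :=
        h.pow_mul_sub_le_sub_of_edge (h.mem_upperBounds_recentValues_add hM r) hki
      _ = M - y (t + (r + (B + 1))) i := by rw [add_assoc]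

theorem antitone_recentMax [Finite V] [Nonempty V] (h : IsDelayedAveraging B ε E y) :
    Antitone (recentMax B y) :=
  antitone_nat_of_succ_le fun _ =>
    recentMax_le (h.mem_upperBounds_recentValues_add recentMax_mem_upperBounds 1)

theorem eventually_recentMax_add_le [Finite V] [Nonempty V] (h : IsDelayedAveraging B ε E y)
    (hconn : ∀ i j, Relation.ReflTransGen E i j) :
    ∀ᶠ r in atTop, ∀ t j,
      recentMax B y (t + r) ≤ recentMax B y t - ε ^ r * (recentMax B y t - y t j) := by
  have hreach := eventually_all.2 fun j => eventually_all.2 fun i =>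
    h.eventually_pow_mul_sub_le_sub (hconn j i)
  obtain ⟨N, hN⟩ := eventually_atTop.1 hreach
  filter_upwards [eventually_ge_atTop (N + B)] with r hr t j
  refine recentMax_le (mem_upperBounds_recentValues.2 fun s hst hts i => ?_)
  obtain ⟨q, rfl⟩ := Nat.exists_eq_add_of_le (show t ≤ s by omega)
  have hgap : 0 ≤ recentMax B y t - y t j :=
    sub_nonneg.2 (recentMax_mem_upperBounds (mem_recentValues_self t j))
  have hpow : ε ^ r ≤ ε ^ q := pow_le_pow_of_le_one h.pos.le h.le_one (by omega)
  have := hN q (by omega) j i t _ recentMax_mem_upperBounds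
  linarith [mul_le_mul_of_nonneg_right hpow hgap]

theorem bddBelow_range_recentMax [Finite V] [Nonempty V] (h : IsDelayedAveraging B ε E y) :
    BddBelow (Set.range (recentMax B y)) := by
  let j := Classical.arbitrary V
  obtain ⟨m, hm⟩ := (Set.finite_range (y 0)).bddBelow
  refine ⟨m, ?_⟩
  rintro _ ⟨t, rfl⟩
  exact (h.le_apply_of_le_initial (fun i => hm ⟨i, rfl⟩) t j).trans
    (recentMax_mem_upperBounds (mem_recentValues_self t j))

theorem exists_tendsto_recentMax [Finite V] [Nonempty V] (h : IsDelayedAveraging B ε E y) :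
    ∃ u, Tendsto (recentMax B y) atTop (nhds u) :=
  ⟨_, tendsto_atTop_ciInf h.antitone_recentMax h.bddBelow_range_recentMax⟩

theorem exists_tendsto [Finite V] [Nonempty V] (h : IsDelayedAveraging B ε E y)
    (hconn : ∀ i j, Relation.ReflTransGen E i j) :
    ∃ v : ℝ, ∀ i, Tendsto (fun t => y t i) atTop (nhds v) := by
  obtain ⟨u, hu⟩ := h.exists_tendsto_recentMax
  obtain ⟨l, hl⟩ := h.neg.exists_tendsto_recentMax
  have hle : ∀ t i, y t i ≤ recentMax B y t := fun t i =>
    recentMax_mem_upperBounds (mem_recentValues_self t i)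
  have hge : ∀ t i, -recentMax B (-y) t ≤ y t i := fun t i =>
    neg_le.1 (recentMax_mem_upperBounds (mem_recentValues_self (y := -y) t i))
  let j := Classical.arbitrary V
  have hnonneg : -l ≤ u := le_of_tendsto_of_tendsto' hl.neg hu fun t => (hge t j).trans (hle t j)
  obtain ⟨r, hr, hr'⟩ := ((h.eventually_recentMax_add_le hconn).and
    (h.neg.eventually_recentMax_add_le hconn)).exists
  have hcontr : u + l ≤ (1 - ε ^ r) * (u + l) := by
    refine le_of_tendsto_of_tendsto' (((tendsto_add_atTop_iff_nat r).2 hu).add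
      ((tendsto_add_atTop_iff_nat r).2 hl)) ((hu.add hl).const_mul (1 - ε ^ r)) fun t => ?_
    have h₁ := hr t j
    have h₂ := hr' t j
    simp only [Pi.neg_apply] at h₂
    linarith
  have hul : -l = u := by nlinarith [pow_pos h.pos r]
  exact ⟨u, fun i => (hul ▸ hl.neg).squeeze hu (fun t => hge t i) fun t => hle t i⟩

end IsDelayedAveraging

namespace RandomDelay

variable {n m B : ℕ} {G : DGraph n m} {P : Matrix (Fin n) (Fin n) ℝ}
  {del : ℕ → Fin m → Fin (B + 1)} {x0 : Fin n → ℝ} {t : ℕ} {d : DelayNode m B}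

/-- The node preceding `d` on its chain, and `d` itself if it is the first node. -/
def pred (d : DelayNode m B) : DelayNode m B :=
  ⟨(d.val.1, d.val.2.1, ⟨d.val.2.2.1 - 1, by omega⟩), (Nat.sub_le _ _).trans d.property⟩

theorem posIdx_pred (d : DelayNode m B) : posIdx (pred d) = posIdx d - 1 := rfl

theorem posIdx_lt (d : DelayNode m B) : posIdx d < B := d.val.2.2.2

theorem Cmat_mulVec_of_posIdx_eq_zero (z : DelayNode m B → ℝ) (hd : posIdx d = 0) :
    (Cmat m B *ᵥ z) d = 0 :=
  Finset.sum_eq_zero fun _ _ => by simp [Cmat, hd]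

theorem Cmat_mulVec_of_posIdx_ne_zero (z : DelayNode m B → ℝ) (hd : posIdx d ≠ 0) :
    (Cmat m B *ᵥ z) d = z (pred d) := by
  have hpred : ∀ d', (d.val.1 = d'.val.1 ∧ d.val.2.1 = d'.val.2.1 ∧ posIdx d = posIdx d' + 1) ↔
      d' = pred d := by
    refine fun d' => ⟨?_, ?_⟩
    · rintro ⟨hedge, hlen, hpos⟩
      exact Subtype.ext (Prod.ext hedge.symm (Prod.ext hlen.symm
        (Fin.ext (Nat.eq_sub_of_add_eq hpos.symm))))
    · rintro rfl
      exact ⟨rfl, rfl, by rw [posIdx_pred]; omega⟩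
  simp [Matrix.mulVec, dotProduct, Cmat, hpred]

theorem Rmat_mulVec (t : ℕ) (v : Fin n → ℝ) (d : DelayNode m B) :
    (Rmat G del t *ᵥ v) d =
      if posIdx d = 0 ∧ (del t (edgeOf d)).1 = lenIdx d + 1 then v (G.src (edgeOf d)) else 0 := by
  simp only [Matrix.mulVec, dotProduct, Rmat, ite_mul, one_mul, zero_mul]
  split_ifs with h <;> simp [h]

/-- At time `t` the delay node `d` holds a message: the one sent at iteration `t - posIdx d` was
routed into the chain of `d`. -/
def HoldsMessage (del : ℕ → Fin m → Fin (B + 1)) (t : ℕ) (d : DelayNode m B) : Prop :=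
  posIdx d < t ∧ (del (t - posIdx d) (edgeOf d)).1 = lenIdx d + 1

theorem holdsMessage_succ_of_posIdx_eq_zero (hd : posIdx d = 0) :
    HoldsMessage del (t + 1) d ↔ (del (t + 1) (edgeOf d)).1 = lenIdx d + 1 := by
  simp [HoldsMessage, hd]

theorem holdsMessage_succ_of_posIdx_ne_zero (hd : posIdx d ≠ 0) :
    HoldsMessage del (t + 1) d ↔ HoldsMessage del t (pred d) := by
  have htime : t + 1 - posIdx d = t - (posIdx d - 1) := by omega
  have hpos : posIdx d < t + 1 ↔ posIdx d - 1 < t := by omega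
  rw [HoldsMessage, HoldsMessage, posIdx_pred, htime, hpos]
  rfl

/-- Both the occupancy vector (`v = 1`) and the states of the delay nodes (`v` the states of the
compute nodes) follow this recursion. -/
theorem eq_ite_holdsMessage {v : ℕ → Fin n → ℝ} {z : ℕ → DelayNode m B → ℝ} (hz₀ : z 0 = 0)
    (hz : ∀ t, z (t + 1) = Rmat G del (t + 1) *ᵥ v t + Cmat m B *ᵥ z t)
    (t : ℕ) (d : DelayNode m B) :
    z t d = if HoldsMessage del t d then v (t - posIdx d - 1) (G.src (edgeOf d)) else 0 := by
  induction t generalizing d with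
  | zero => simp [hz₀, HoldsMessage]
  | succ t ih =>
    rw [hz, Pi.add_apply, Rmat_mulVec]
    by_cases hd : posIdx d = 0
    · simp [Cmat_mulVec_of_posIdx_eq_zero _ hd, holdsMessage_succ_of_posIdx_eq_zero hd, hd]
    · have htime : t - posIdx (pred d) - 1 = t + 1 - posIdx d - 1 := by
        rw [posIdx_pred]; omega
      rw [if_neg fun h => hd h.1, zero_add, Cmat_mulVec_of_posIdx_ne_zero _ hd, ih, htime]
      simp only [holdsMessage_succ_of_posIdx_ne_zero hd]
      rfl

theorem phi_eq_ite (t : ℕ) (d : DelayNode m B) :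
    phi G del t d = if HoldsMessage del t d then 1 else 0 :=
  eq_ite_holdsMessage (v := fun _ _ => 1) rfl (fun _ => rfl) t d

theorem phi_eq_one_iff : phi G del t d = 1 ↔ HoldsMessage del t d := by
  simp [phi_eq_ite]

theorem xhat_inr (t : ℕ) (d : DelayNode m B) :
    xhat G P del x0 t (Sum.inr d) = if HoldsMessage del t d then
      xhat G P del x0 (t - posIdx d - 1) (Sum.inl (G.src (edgeOf d))) else 0 := by
  refine eq_ite_holdsMessage (v := fun t i => xhat G P del x0 t (Sum.inl i))
    (z := fun t d => xhat G P del x0 t (Sum.inr d)) rfl (fun t => ?_) t d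
  funext d
  simp only [xhat, Phat, Matrix.fromBlocks_mulVec, Sum.elim_inr]
  rfl

theorem xhat_mem_recentValues {u : Fin n ⊕ DelayNode m B} (hu : occupied G del t u) :
    xhat G P del x0 t u ∈ recentValues B (fun t i => xhat G P del x0 t (Sum.inl i)) t := by
  rcases u with i | d
  · exact mem_recentValues_self (y := fun t i => xhat G P del x0 t (Sum.inl i)) t i
  · have hd : HoldsMessage del t d := phi_eq_one_iff.1 hu
    rw [xhat_inr, if_pos hd]
    have := hd.1
    have := posIdx_lt d
    exact mem_recentValues (y := fun t i => xhat G P del x0 t (Sum.inl i)) (by omega) (by omega) _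

theorem Lmat_nonneg (t : ℕ) (i j : Fin n) : 0 ≤ Lmat G del t i j := by
  unfold Lmat
  split_ifs <;> simp

theorem denom_nonneg (t : ℕ) (i j : Fin n) : 0 ≤ denom G del t i j :=
  add_nonneg (Nat.cast_nonneg _) (Lmat_nonneg t i j)

theorem denom_le (t : ℕ) (i j : Fin n) :
    denom G del t i j ≤ Fintype.card (DelayNode m B) + 1 := by
  refine add_le_add (Nat.cast_le.mpr (Finset.card_le_univ _)) ?_
  unfold Lmat
  split_ifs <;> simp

theorem denom_self (hG : ∀ e, G.src e ≠ G.tgt e) (t : ℕ) (i : Fin n) :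
    denom G del t i i = 0 := by
  have hw : wgt G del t i i = 0 :=
    Finset.card_eq_zero.mpr <| Finset.filter_eq_empty_iff.mpr fun d _ h =>
      hG (edgeOf d) (h.2.1.trans h.1.symm)
  have hL : Lmat G del t i i = 0 := if_neg fun ⟨e, hsrc, htgt, _⟩ => hG e (hsrc.trans htgt.symm)
  simp [denom, hw, hL]

theorem PLmat_nonneg (hP : ∀ i j, 0 ≤ P i j) (t : ℕ) (i j : Fin n) : 0 ≤ PLmat G P del t i j :=
  mul_nonneg (Lmat_nonneg t i j) (div_nonneg (hP i j) (denom_nonneg t i j))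

theorem PFmat_nonneg (hP : ∀ i j, 0 ≤ P i j) (t : ℕ) (i : Fin n) (d : DelayNode m B) :
    0 ≤ PFmat G P del t i d := by
  refine mul_nonneg (mul_nonneg ?_ ?_) (div_nonneg (hP _ _) (denom_nonneg _ _ _))
  · unfold Jmat
    split_ifs <;> simp
  · rw [phi_eq_ite]
    split_ifs <;> simp

theorem sum_PFmat (t : ℕ) (i : Fin n) :
    ∑ d, PFmat G P del t i d = ∑ j, wgt G del t i j * (P i j / denom G del t i j) := by
  have hrow : ∀ d, PFmat G P del t i d = ∑ j, if G.tgt (edgeOf d) = i ∧ G.src (edgeOf d) = j ∧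
      isTerminal d ∧ phi G del (t - 1) d = 1 then P i j / denom G del t i j else 0 := by
    intro d
    rw [Finset.sum_eq_single (G.src (edgeOf d)) (fun j _ hj => if_neg fun h => hj h.2.1.symm)
      (by simp)]
    by_cases hd : HoldsMessage del (t - 1) d <;> simp [PFmat, Jmat, phi_eq_ite, hd]
  simp only [hrow]
  rw [Finset.sum_comm]
  refine Finset.sum_congr rfl fun j _ => ?_
  rw [← Finset.sum_filter, Finset.sum_const, nsmul_eq_mul]
  rfl

theorem sum_PFmat_add_sum_PLmat (t : ℕ) (i : Fin n) :
    ∑ d, PFmat G P del t i d + ∑ j, PLmat G P del t i j =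
      ∑ j, denom G del t i j * (P i j / denom G del t i j) := by
  rw [sum_PFmat, ← Finset.sum_add_distrib]
  exact Finset.sum_congr rfl fun j _ => (add_mul _ _ _).symm

theorem sum_PFmat_add_sum_PLmat_le (hV : G.Valid P) (t : ℕ) (i : Fin n) :
    ∑ d, PFmat G P del t i d + ∑ j, PLmat G P del t i j ≤ 1 - P i i := by
  rw [sum_PFmat_add_sum_PLmat, ← hV.rowSum i, ← Finset.sum_erase_eq_sub (Finset.mem_univ i),
    ← Finset.sum_erase Finset.univ (a := i) (by simp [denom_self hV.noSelf])]
  refine Finset.sum_le_sum fun j _ => ?_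
  rw [mul_div_left_comm]
  exact mul_le_of_le_one_right (hV.nonneg i j) (div_self_le_one _)

theorem le_Phat_inl_self (hV : G.Valid P) (t : ℕ) (i : Fin n) :
    P i i ≤ Phat G P del t (Sum.inl i) (Sum.inl i) := by
  have hsum := sum_PFmat_add_sum_PLmat_le (del := del) hV t i
  have hL := PLmat_nonneg (G := G) (del := del) hV.nonneg t i i
  simp only [Phat, Matrix.fromBlocks_apply₁₁, P11, Matrix.add_apply, Matrix.sub_apply,
    Matrix.one_apply_eq, Matrix.diagonal_apply_eq]
  linarith

theorem Phat_inl_inl_of_ne (t : ℕ) {i j : Fin n} (hij : i ≠ j) :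
    Phat G P del t (Sum.inl i) (Sum.inl j) = PLmat G P del t i j := by
  simp [Phat, P11, hij]

theorem Phat_inl_nonneg (hV : G.Valid P) (t : ℕ) (i : Fin n) (u : Fin n ⊕ DelayNode m B) :
    0 ≤ Phat G P del t (Sum.inl i) u := by
  rcases u with j | d
  · rcases eq_or_ne i j with rfl | hij
    · exact (hV.nonneg i i).trans (le_Phat_inl_self hV t i)
    · exact (PLmat_nonneg hV.nonneg t i j).trans_eq (Phat_inl_inl_of_ne t hij).symm
  · exact PFmat_nonneg hV.nonneg t i d

theorem sum_Phat_inl (t : ℕ) (i : Fin n) : ∑ u, Phat G P del t (Sum.inl i) u = 1 := by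
  have hP11 : ∑ j, P11 G P del t i j =
      1 - (∑ d, PFmat G P del t i d + ∑ j, PLmat G P del t i j) + ∑ j, PLmat G P del t i j := by
    simp [P11, Finset.sum_add_distrib, Matrix.one_apply, Matrix.diagonal_apply]
  rw [Fintype.sum_sum_type]
  simp only [Phat, Matrix.fromBlocks_apply₁₁, Matrix.fromBlocks_apply₁₂, hP11]
  ring

theorem occupied_of_Phat_inl_ne_zero {i : Fin n} {u : Fin n ⊕ DelayNode m B}
    (hu : Phat G P del (t + 1) (Sum.inl i) u ≠ 0) : occupied G del t u := by
  rcases u with j | d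
  · trivial
  · refine phi_eq_one_iff.2 (by_contra fun hd => hu ?_)
    simp [Phat, PFmat, phi_eq_ite, hd]

theorem exists_xhat_succ_inl_eq (hV : G.Valid P) {ε : ℝ} (hε₀ : 0 < ε) (hε₁ : ε < 1) {i : Fin n}
    {u : Fin n ⊕ DelayNode m B} (hu : ε ≤ Phat G P del (t + 1) (Sum.inl i) u) :
    ∃ a ∈ convexHull ℝ (recentValues B (fun t i => xhat G P del x0 t (Sum.inl i)) t),
      xhat G P del x0 (t + 1) (Sum.inl i) = ε * xhat G P del x0 t u + (1 - ε) * a :=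
  exists_mem_sum_smul_eq_of_convex (convex_convexHull ℝ _) (Phat_inl_nonneg hV (t + 1) i)
    (sum_Phat_inl (t + 1) i)
    (fun _ hw => subset_convexHull ℝ _ (xhat_mem_recentValues (occupied_of_Phat_inl_ne_zero hw)))
    hε₀ hε₁ hu

theorem le_Phat_of_del_eq_zero (hV : G.Valid P) {e : Fin m} (he : (del t e).1 = 0) :
    P (G.tgt e) (G.src e) / (Fintype.card (DelayNode m B) + 1) ≤
      Phat G P del t (Sum.inl (G.tgt e)) (Sum.inl (G.src e)) := by
  have hL : Lmat G del t (G.tgt e) (G.src e) = 1 := if_pos ⟨e, rfl, rfl, he⟩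
  have hdenom : 0 < denom G del t (G.tgt e) (G.src e) := by rw [denom, hL]; positivity
  rw [Phat_inl_inl_of_ne t (hV.noSelf e).symm, PLmat, hL, one_mul]
  exact div_le_div_of_nonneg_left (hV.nonneg _ _) hdenom (denom_le _ _ _)

theorem le_Phat_of_holdsMessage (hP : ∀ i j, 0 ≤ P i j) (hd : HoldsMessage del t d)
    (hterm : isTerminal d) :
    P (G.tgt (edgeOf d)) (G.src (edgeOf d)) / (Fintype.card (DelayNode m B) + 1) ≤
      Phat G P del (t + 1) (Sum.inl (G.tgt (edgeOf d))) (Sum.inr d) := by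
  have hphi : phi G del t d = 1 := phi_eq_one_iff.2 hd
  have hw : 0 < wgt G del (t + 1) (G.tgt (edgeOf d)) (G.src (edgeOf d)) :=
    Finset.card_pos.2 ⟨d, Finset.mem_filter.2 ⟨Finset.mem_univ d, rfl, rfl, hterm, hphi⟩⟩
  have hdenom : 0 < denom G del (t + 1) (G.tgt (edgeOf d)) (G.src (edgeOf d)) :=
    add_pos_of_pos_of_nonneg (Nat.cast_pos.2 hw) (Lmat_nonneg _ _ _)
  have hPhat : Phat G P del (t + 1) (Sum.inl (G.tgt (edgeOf d))) (Sum.inr d) =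
      P (G.tgt (edgeOf d)) (G.src (edgeOf d)) /
        denom G del (t + 1) (G.tgt (edgeOf d)) (G.src (edgeOf d)) := by
    simp [Phat, PFmat, Jmat, hphi, hterm]
  rw [hPhat]
  exact div_le_div_of_nonneg_left (hP _ _) hdenom (denom_le _ _ _)

theorem exists_delivery (hV : G.Valid P) (del : ℕ → Fin m → Fin (B + 1)) (x0 : Fin n → ℝ)
    (t : ℕ) (e : Fin m) :
    ∃ k ≤ B, ∃ u, xhat G P del x0 (t + k) u = xhat G P del x0 t (Sum.inl (G.src e)) ∧
      P (G.tgt e) (G.src e) / (Fintype.card (DelayNode m B) + 1) ≤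
        Phat G P del (t + k + 1) (Sum.inl (G.tgt e)) u := by
  rcases hdel : (del (t + 1) e).1 with _ | k
  · exact ⟨0, Nat.zero_le B, Sum.inl (G.src e), rfl, le_Phat_of_del_eq_zero hV hdel⟩
  · have hk : k < B := by omega
    let d : DelayNode m B := ⟨(e, ⟨k, hk⟩, ⟨k, hk⟩), le_rfl⟩
    have hpos : posIdx d = k := rfl
    have hsend : t + (k + 1) - posIdx d = t + 1 := by omega
    have hd : HoldsMessage del (t + (k + 1)) d := ⟨by omega, by rw [hsend]; exact hdel⟩
    refine ⟨k + 1, hk, Sum.inr d, ?_, le_Phat_of_holdsMessage hV.nonneg hd rfl⟩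
    rw [xhat_inr, if_pos hd, hsend]
    rfl

theorem exists_isDelayedAveraging (hV : G.Valid P) (del : ℕ → Fin m → Fin (B + 1)) :
    ∃ ε : ℝ, ∀ x0, IsDelayedAveraging B ε (fun i j => ∃ e, G.src e = i ∧ G.tgt e = j)
      (fun t i => xhat G P del x0 t (Sum.inl i)) := by
  obtain ⟨ε, ⟨hε₀, hε₁⟩, hε⟩ := exists_mem_Ioo_forall_le fun p : Fin n × Fin n =>
    P p.1 p.2 / (Fintype.card (DelayNode m B) + 1)
  have hweight : ∀ i j, 0 < P i j → ε ≤ P i j / (Fintype.card (DelayNode m B) + 1) :=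
    fun i j hij => hε (i, j) (by positivity)
  refine ⟨ε, fun x0 => ⟨hε₀, hε₁.le, fun t i => ?_, ?_⟩⟩
  · have hpos : 0 < P i i := (hV.support i i).2 (Or.inl rfl)
    refine exists_xhat_succ_inl_eq hV hε₀ hε₁ (u := Sum.inl i) ?_
    exact (hweight i i hpos).trans
      ((div_le_self hpos.le (by simp)).trans (le_Phat_inl_self hV (t + 1) i))
  · rintro t _ _ ⟨e, rfl, rfl⟩
    obtain ⟨k, hk, u, hu, hPhat⟩ := exists_delivery hV del x0 t e
    refine ⟨k, hk, ?_⟩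
    have hpos := (hV.support (G.tgt e) (G.src e)).2 (Or.inr ⟨e, rfl, rfl⟩)
    have := exists_xhat_succ_inl_eq (x0 := x0) hV hε₀ hε₁ ((hweight _ _ hpos).trans hPhat)
    rwa [hu] at this

theorem xhat_eq_Mprod_mulVec (t : ℕ) :
    xhat G P del x0 t = Mprod G P del t *ᵥ Sum.elim x0 0 := by
  induction t with
  | zero => exact (Matrix.one_mulVec _).symm
  | succ t ih => rw [xhat, Mprod, ih, Matrix.mulVec_mulVec]

theorem xhat_inl_eq_sum_M1 (t : ℕ) (i : Fin n) :
    xhat G P del x0 t (Sum.inl i) = ∑ j, M1 G P del t i j * x0 j := by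
  simp [xhat_eq_Mprod_mulVec, Matrix.mulVec, dotProduct, Fintype.sum_sum_type, M1]

theorem xhat_single_inl (t : ℕ) (i j : Fin n) :
    xhat G P del (Pi.single j 1) t (Sum.inl i) = M1 G P del t i j := by
  simp [xhat_inl_eq_sum_M1, Pi.single_apply]

theorem M1_mem_stdSimplex (hV : G.Valid P) (t : ℕ) (i : Fin n) :
    M1 G P del t i ∈ stdSimplex ℝ (Fin n) := by
  obtain ⟨ε, h⟩ := exists_isDelayedAveraging hV del
  constructor
  · intro j
    rw [← xhat_single_inl]
    exact (h (Pi.single j 1)).le_apply_of_le_initial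
      (Pi.single_nonneg (i := j).2 zero_le_one) t i
  · have hone : ∑ j, M1 G P del t i j = xhat G P del 1 t (Sum.inl i) := by
      simp [xhat_inl_eq_sum_M1]
    rw [hone]
    exact le_antisymm ((h 1).apply_le_of_initial_le (fun _ => le_rfl) t i)
      ((h 1).le_apply_of_le_initial (fun _ => le_rfl) t i)

theorem exists_tendsto_M1 (hn : 0 < n) (hV : G.Valid P) (del : ℕ → Fin m → Fin (B + 1)) :
    ∃ θ ∈ stdSimplex ℝ (Fin n), ∀ i, Tendsto (fun t => M1 G P del t i) atTop (nhds θ) := by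
  have : NeZero n := ⟨hn.ne'⟩
  obtain ⟨ε, h⟩ := exists_isDelayedAveraging hV del
  choose θ hθ using fun j => (h (Pi.single j 1)).exists_tendsto hV.connected
  simp only [xhat_single_inl] at hθ
  have hM : ∀ i, Tendsto (fun t => M1 G P del t i) atTop (nhds θ) :=
    fun i => tendsto_pi_nhds.2 fun j => hθ j i
  exact ⟨θ, (isClosed_stdSimplex ℝ (Fin n)).mem_of_tendsto (hM 0)
    (.of_forall fun t => M1_mem_stdSimplex hV t 0), hM⟩

end RandomDelay

open RandomDelay in
theorem random_delay_consensus_convex_combination_general {n m B : ℕ} (hn : 0 < n)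
    (G : DGraph n m) (P : Matrix (Fin n) (Fin n) ℝ) (hV : G.Valid P)
    (del : ℕ → Fin m → Fin (B + 1)) :
    ∃ θ ∈ stdSimplex ℝ (Fin n), ∀ (x0 : Fin n → ℝ) (i : Fin n),
      Tendsto (fun t => xhat G P del x0 t (Sum.inl i)) atTop (nhds (∑ j, θ j * x0 j)) := by
  obtain ⟨θ, hθ, hM⟩ := exists_tendsto_M1 hn hV del
  refine ⟨θ, hθ, fun x0 i => ?_⟩
  simp only [xhat_inl_eq_sum_M1]
  exact tendsto_finsetSum _ fun j _ => (tendsto_pi_nhds.1 (hM i) j).mul_const (x0 j)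

open RandomDelay Filter in
/-- **Consensus on a convex combination of the initial values.**  For every
realization of the delays, there are a value `v` and convex weights `θ` such that
the state of every compute node converges to `v = ∑ j, θ j * x0 j`. -/
theorem random_delay_consensus_convex_combination
    {n m B : ℕ} (hn : 0 < n) (hB : 1 ≤ B)
    (G : DGraph n m) (P : Matrix (Fin n) (Fin n) ℝ) (hV : G.Valid P)
    (del : ℕ → Fin m → Fin (B + 1)) (x0 : Fin n → ℝ) :
    ∃ (v : ℝ) (θ : Fin n → ℝ),
      (∀ j, 0 ≤ θ j) ∧ (∑ j, θ j = 1) ∧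
      (∀ i : Fin n,
        Tendsto (fun t => xhat G P del x0 t (Sum.inl i)) atTop (nhds v)) ∧
      v = ∑ j, θ j * x0 j := by
  obtain ⟨θ, hθ, h⟩ := random_delay_consensus_convex_combination_general hn G P hV del
  exact ⟨_, θ, hθ.1, hθ.2, h x0, rfl⟩
end
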